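/- Let n ≥ d ≥ 5000 be integers and δ ∈ (e^{-n}, e^{-1}). For any estimator Φ : {1,…,d}^n → Δ_d (which may depend on δ), there exists a distribution P ∈ Δ_d such that, writing P̂_n = Φ(X_1, …, X_n) for an i.i.d. sample from P, the probability that χ²(P, P̂_n) ≥ C₄ · ( (d + √d·log(1/δ))/n + d·log²(1/δ)/n² ) is at least δ, where C₄ = 1/5000. -/

import Mathlib

open Finset
open scoped ENNReal

/-- Probability of an event `E` under an i.i.d. sample of size `n` from the
distribution `p` on `{1, …, d}`. -/
noncomputable def sampleProb {n d : ℕ} (p : Fin d → ℝ) (E : Set (Fin n → Fin d)) : ℝ :=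
  ∑ x : Fin n → Fin d, Set.indicator E (fun y => ∏ i, p (y i)) x

/-- χ²-divergence, valued in `ℝ≥0∞`: a term with `q j = 0` and `p j ≠ q j`
contributes `+∞` (and contributes `0` if `p j = q j`). -/
noncomputable def chiSqE {d : ℕ} (p q : Fin d → ℝ) : ℝ≥0∞ :=
  ∑ j, ENNReal.ofReal ((p j - q j) ^ 2) / ENNReal.ofReal (q j)

/-!
Write `L = log (1 / δ)`. Two families of hard distributions put most of their mass on one heavy
atom, and the size of `L` decides which one is used.

* If `√d ≤ 2 * L`, look only at the constant sample `z, …, z`. The estimate `q` it produces has an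
  atom `j ≠ z` with `q j` of order at most `(1 - q z) / d`. Either `q` is too spread out for the
  point mass at `z`, or `q j` is so small that `q` is far from the distribution giving `j` the mass
  `ε = L / (2 * n)` and `z` the rest. Both distributions produce the constant sample with
  probability at least `(1 - ε) ^ n ≥ δ`.
* If `2 * L ≤ √d`, split the light atoms into about `d / 2` pairs and let a sign vector choose which
  atom of each pair gets the mass `b` of order `1 / n`. A pair is missed by the sample with
  probability at least `(1 - b) ^ n`, in which case nothing is learnt about its sign. Averaging over
  signs, some sign vector makes a constant fraction of the pairs misranked with probability at
  least `exp (-1)`, and each misranked pair costs `b / 2` in χ²-divergence.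
-/

section SampleProb

variable {n d : ℕ} {p q : Fin d → ℝ}

lemma sampleProb_mono (hp : ∀ j, 0 ≤ p j) {E F : Set (Fin n → Fin d)} (hEF : E ⊆ F) :
    sampleProb p E ≤ sampleProb p F :=
  Finset.sum_le_sum fun x _ =>
    Set.indicator_le_indicator_of_subset hEF (fun y => Finset.prod_nonneg fun i _ => hp (y i)) x

lemma sampleProb_union_le (hp : ∀ j, 0 ≤ p j) (E F : Set (Fin n → Fin d)) :
    sampleProb p (E ∪ F) ≤ sampleProb p E + sampleProb p F := by
  rw [sampleProb, sampleProb, sampleProb, ← Finset.sum_add_distrib]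
  refine Finset.sum_le_sum fun x _ => ?_
  have hinter : 0 ≤ (E ∩ F).indicator (fun y => ∏ i, p (y i)) x :=
    Set.indicator_nonneg (fun y _ => Finset.prod_nonneg fun i _ => hp (y i)) x
  have hadd := congrFun (Set.indicator_union_add_inter (fun y => ∏ i, p (y i)) E F) x
  simp only [Pi.add_apply] at hadd
  linarith

lemma sampleProb_congr {s : Finset (Fin d)} (hpq : ∀ j ∈ s, p j = q j)
    {E : Set (Fin n → Fin d)} (hE : ∀ x ∈ E, ∀ i, x i ∈ s) : sampleProb p E = sampleProb q E := by
  have h : Set.EqOn (fun y => ∏ i, p (y i)) (fun y => ∏ i, q (y i)) E := fun x hx =>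
    Finset.prod_congr rfl fun i _ => hpq _ (hE x hx i)
  simp only [sampleProb, Set.indicator_congr h]

lemma sampleProb_forall_mem (p : Fin d → ℝ) (s : Finset (Fin d)) :
    sampleProb p {x : Fin n → Fin d | ∀ i, x i ∈ s} = (∑ j ∈ s, p j) ^ n := by
  have hfilter : {x : Fin n → Fin d | ∀ i, x i ∈ s} =
      (Fintype.piFinset fun _ => s : Finset (Fin n → Fin d)) := by
    ext x
    simp
  rw [Finset.sum_pow', sampleProb, hfilter, Finset.sum_indicator_subset _ (Finset.subset_univ _)]

lemma sum_prod_eq_one (hp : ∑ j, p j = 1) : ∑ x : Fin n → Fin d, ∏ i, p (x i) = 1 := by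
  rw [← Fintype.sum_pow, hp, one_pow]

lemma pow_le_sampleProb_of_const_mem (hp : ∀ j, 0 ≤ p j) {z : Fin d} {E : Set (Fin n → Fin d)}
    (hz : Function.const (Fin n) z ∈ E) : p z ^ n ≤ sampleProb p E := by
  have hsub : {x : Fin n → Fin d | ∀ i, x i ∈ ({z} : Finset (Fin d))} ⊆ E := fun x hx => by
    rwa [show x = Function.const (Fin n) z from funext fun i => Finset.mem_singleton.1 (hx i)]
  simpa only [sampleProb_forall_mem, Finset.sum_singleton] using sampleProb_mono hp hsub

/-- Samples staying in `s` cannot distinguish `p` from `q`. -/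
lemma pow_le_sampleProb_add_sampleProb (hp : ∀ j, 0 ≤ p j) (hq : ∀ j, 0 ≤ q j)
    {s : Finset (Fin d)} (hpq : ∀ j ∈ s, p j = q j) {E F : Set (Fin n → Fin d)}
    (hEF : E ∪ F = Set.univ) : (∑ j ∈ s, p j) ^ n ≤ sampleProb p E + sampleProb q F := by
  set U : Set (Fin n → Fin d) := {x | ∀ i, x i ∈ s}
  calc (∑ j ∈ s, p j) ^ n = sampleProb p U := (sampleProb_forall_mem p s).symm
    _ = sampleProb p (U ∩ E ∪ U ∩ F) := by
      rw [← Set.inter_union_distrib_left, hEF, Set.inter_univ]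
    _ ≤ sampleProb p (U ∩ E) + sampleProb p (U ∩ F) := sampleProb_union_le hp _ _
    _ = sampleProb p (U ∩ E) + sampleProb q (U ∩ F) := by
      rw [sampleProb_congr hpq fun x (hx : x ∈ U ∩ F) => hx.1]
    _ ≤ sampleProb p E + sampleProb q F :=
      add_le_add (sampleProb_mono hp Set.inter_subset_right)
        (sampleProb_mono hq Set.inter_subset_right)

open Classical in
lemma sum_sampleProb_eq_sum_mul_card {ι : Type*} [Fintype ι] (p : Fin d → ℝ)
    (A : ι → Set (Fin n → Fin d)) :
    ∑ k, sampleProb p (A k) = ∑ x : Fin n → Fin d, (∏ i, p (x i)) * #{k | x ∈ A k} := by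
  simp only [sampleProb]
  rw [Finset.sum_comm]
  refine Finset.sum_congr rfl fun x _ => ?_
  simp only [Set.indicator, ← Finset.sum_filter, Finset.sum_const, nsmul_eq_mul, mul_comm]

open Classical in
/-- Markov's inequality for the number of the events `A k` that do not occur. -/
lemma sum_sampleProb_le_card_mul {ι : Type*} [Fintype ι] (hp : p ∈ stdSimplex ℝ (Fin d))
    (A : ι → Set (Fin n → Fin d)) {θ : ℝ} (hθ : 0 ≤ θ) :
    ∑ k, sampleProb p (A k) ≤
      Fintype.card ι * (sampleProb p {x | θ * Fintype.card ι ≤ #{k | x ∈ A k}} + θ) := by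
  set E : Set (Fin n → Fin d) := {x | θ * Fintype.card ι ≤ #{k | x ∈ A k}}
  have hpoint (x : Fin n → Fin d) : (∏ i, p (x i)) * #{k | x ∈ A k} ≤
      Fintype.card ι * (E.indicator (fun y => ∏ i, p (y i)) x + (∏ i, p (x i)) * θ) := by
    have hprod : 0 ≤ ∏ i, p (x i) := Finset.prod_nonneg fun i _ => hp.1 (x i)
    by_cases hx : x ∈ E
    · have hcard : (#{k | x ∈ A k} : ℝ) ≤ Fintype.card ι := mod_cast Finset.card_le_univ _
      rw [Set.indicator_of_mem hx]
      calc (∏ i, p (x i)) * #{k | x ∈ A k} ≤ (∏ i, p (x i)) * Fintype.card ι := by gcongr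
        _ = Fintype.card ι * ∏ i, p (x i) := mul_comm _ _
        _ ≤ Fintype.card ι * (∏ i, p (x i) + (∏ i, p (x i)) * θ) := by
          gcongr
          exact le_add_of_nonneg_right (mul_nonneg hprod hθ)
    · have hcard : (#{k | x ∈ A k} : ℝ) ≤ θ * Fintype.card ι := (not_le.1 hx).le
      rw [Set.indicator_of_notMem hx, zero_add]
      calc (∏ i, p (x i)) * #{k | x ∈ A k} ≤ (∏ i, p (x i)) * (θ * Fintype.card ι) := by gcongr
        _ = Fintype.card ι * ((∏ i, p (x i)) * θ) := by ring
  calc ∑ k, sampleProb p (A k) = ∑ x : Fin n → Fin d, (∏ i, p (x i)) * #{k | x ∈ A k} :=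
        sum_sampleProb_eq_sum_mul_card p A
    _ ≤ ∑ x : Fin n → Fin d,
        Fintype.card ι * (E.indicator (fun y => ∏ i, p (y i)) x + (∏ i, p (x i)) * θ) :=
      Finset.sum_le_sum fun x _ => hpoint x
    _ = Fintype.card ι * (sampleProb p E + θ) := by
      rw [← Finset.mul_sum, Finset.sum_add_distrib, ← Finset.sum_mul,
        sum_prod_eq_one hp.2, one_mul, sampleProb]

end SampleProb

section ChiSq

/-- The contribution of an atom with true mass `a` and estimated mass `b` to the χ²-divergence;
like `chiSqE`, it is `+∞` when `b = 0` and `a ≠ 0`. -/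
noncomputable def chiSqTerm (a b : ℝ) : ℝ≥0∞ :=
  ENNReal.ofReal ((a - b) ^ 2) / ENNReal.ofReal b

lemma ofReal_le_chiSqTerm_zero (b : ℝ) : ENNReal.ofReal b ≤ chiSqTerm 0 b := by
  rcases le_or_gt b 0 with hb | hb
  · simp [ENNReal.ofReal_of_nonpos hb]
  · rw [chiSqTerm, ← ENNReal.ofReal_div_of_pos hb]
    refine ENNReal.ofReal_le_ofReal (le_of_eq ?_)
    field_simp
    ring

lemma ofReal_le_chiSqTerm_of_le_half {a b T : ℝ} (ha : 0 < a) (hb : b ≤ a / 2)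
    (hT : T * b ≤ (a / 2) ^ 2) : ENNReal.ofReal T ≤ chiSqTerm a b := by
  have hsq : (a / 2) ^ 2 ≤ (a - b) ^ 2 := by gcongr; linarith
  rcases le_or_gt b 0 with hb0 | hb0
  · have hne : ENNReal.ofReal ((a - b) ^ 2) ≠ 0 :=
      (ENNReal.ofReal_pos.2 ((by positivity : 0 < (a / 2) ^ 2).trans_le hsq)).ne'
    rw [chiSqTerm, ENNReal.ofReal_of_nonpos hb0, ENNReal.div_zero hne]
    exact le_top
  · rw [chiSqTerm, ← ENNReal.ofReal_div_of_pos hb0]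
    exact ENNReal.ofReal_le_ofReal ((le_div_iff₀ hb0).2 (hT.trans hsq))

lemma ofReal_half_le_chiSqTerm_add {a b c : ℝ} (ha : 0 < a) (hbc : b ≤ c) :
    ENNReal.ofReal (a / 2) ≤ chiSqTerm a b + chiSqTerm 0 c := by
  rcases le_total (a / 2) c with hc | hc
  · exact (ENNReal.ofReal_le_ofReal hc).trans ((ofReal_le_chiSqTerm_zero c).trans le_add_self)
  · have hb : b ≤ a / 2 := hbc.trans hc
    refine (ofReal_le_chiSqTerm_of_le_half ha hb ?_).trans le_self_add
    calc a / 2 * b ≤ a / 2 * (a / 2) := by gcongr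
      _ = (a / 2) ^ 2 := (sq _).symm

variable {d : ℕ}

lemma chiSqTerm_le_chiSqE (p q : Fin d → ℝ) (j : Fin d) : chiSqTerm (p j) (q j) ≤ chiSqE p q :=
  Finset.single_le_sum (f := fun j => chiSqTerm (p j) (q j)) (fun _ _ => zero_le)
    (Finset.mem_univ j)

lemma sum_chiSqTerm_comp_le_chiSqE {α : Type*} [Fintype α] {f : α → Fin d}
    (hf : Function.Injective f) (p q : Fin d → ℝ) :
    ∑ a, chiSqTerm (p (f a)) (q (f a)) ≤ chiSqE p q := by
  have h := ENNReal.tsum_comp_le_tsum_of_injective hf fun j => chiSqTerm (p j) (q j)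
  rwa [tsum_fintype, tsum_fintype] at h

lemma ofReal_sum_le_chiSqE {p q : Fin d → ℝ} {s : Finset (Fin d)} (hq : ∀ j ∈ s, 0 ≤ q j)
    (hp : ∀ j ∈ s, p j = 0) : ENNReal.ofReal (∑ j ∈ s, q j) ≤ chiSqE p q := by
  calc ENNReal.ofReal (∑ j ∈ s, q j) = ∑ j ∈ s, ENNReal.ofReal (q j) :=
        ENNReal.ofReal_sum_of_nonneg hq
    _ ≤ ∑ j ∈ s, chiSqTerm (p j) (q j) := Finset.sum_le_sum fun j hj => by
      rw [hp j hj]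
      exact ofReal_le_chiSqTerm_zero (q j)
    _ ≤ chiSqE p q := Finset.sum_le_sum_of_subset (Finset.subset_univ s)

end ChiSq

section TwoPoint

variable {n d : ℕ}

lemma exists_ne_card_sub_one_mul_le {α : Type*} [Fintype α] [Nontrivial α] {q : α → ℝ}
    (hq : ∑ j, q j = 1) (z : α) : ∃ j ≠ z, (Fintype.card α - 1) * q j ≤ 1 - q z := by
  classical
  have hcard : (#(Finset.univ.erase z) : ℝ) = Fintype.card α - 1 := by
    rw [Finset.card_erase_of_mem (Finset.mem_univ z), Finset.card_univ,
      Nat.cast_sub Fintype.card_pos, Nat.cast_one]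
  obtain ⟨w, hw⟩ := exists_ne z
  obtain ⟨j, hj, hmin⟩ := Finset.exists_min_image (Finset.univ.erase z) q
    ⟨w, Finset.mem_erase.2 ⟨hw, Finset.mem_univ w⟩⟩
  refine ⟨j, Finset.ne_of_mem_erase hj, ?_⟩
  rw [← hcard, ← hq, ← Finset.sum_erase_eq_sub (Finset.mem_univ z), ← nsmul_eq_mul]
  exact Finset.card_nsmul_le_sum _ _ _ hmin

lemma single_add_single_mem_stdSimplex {α : Type*} [Fintype α] [DecidableEq α] (z j : α) {ε : ℝ}
    (hε₀ : 0 ≤ ε) (hε₁ : ε ≤ 1) :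
    (Pi.single z (1 - ε) + Pi.single j ε : α → ℝ) ∈ stdSimplex ℝ α := by
  refine ⟨Pi.le_def.1 ?_, by simp [Finset.sum_add_distrib]⟩
  exact add_nonneg (Pi.single_nonneg.2 (sub_nonneg.2 hε₁)) (Pi.single_nonneg.2 hε₀)

lemma min_one_mul_self_le {x T : ℝ} (hx : 0 ≤ x) (hT : T = (x + x ^ 2) / 16) :
    min 1 T * T ≤ x ^ 2 / 8 := by
  have hT₀ : 0 ≤ T := by rw [hT]; positivity
  rcases le_total x 1 with hx₁ | hx₁
  · have hTx : T ≤ x / 8 := by nlinarith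
    calc min 1 T * T ≤ T * T := by gcongr; exact min_le_right 1 T
      _ ≤ x / 8 * (x / 8) := by gcongr
      _ ≤ x ^ 2 / 8 := by nlinarith
  · calc min 1 T * T ≤ 1 * T := by gcongr; exact min_le_left 1 T
      _ ≤ x ^ 2 / 8 := by nlinarith

lemma le_half_and_mul_le_sq {d ε T a : ℝ} (hd : 1 ≤ d) (hε₀ : 0 ≤ ε) (hε₁ : ε ≤ 1)
    (hT : T = (√d * ε + d * ε ^ 2) / 16) (ha : d * a ≤ 2 * min 1 T) :
    a ≤ ε / 2 ∧ T * a ≤ (ε / 2) ^ 2 := by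
  have hd₀ : 0 < d := zero_lt_one.trans_le hd
  have hT₀ : 0 ≤ T := by rw [hT]; positivity
  have hhalf : d * a ≤ d * (ε / 2) := by
    have hsqrt : √d ≤ d := (Real.sqrt_le_left hd₀.le).2 (by nlinarith)
    have hlinear : √d * ε ≤ d * ε := by gcongr
    have hquadratic : d * ε ^ 2 ≤ d * ε := by gcongr; nlinarith
    linarith [min_le_right 1 T, mul_nonneg hd₀.le hε₀]
  have hmul : d * (T * a) ≤ d * (ε / 2) ^ 2 := by
    have hsq : (√d * ε) ^ 2 = d * ε ^ 2 := by rw [mul_pow, Real.sq_sqrt hd₀.le]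
    calc d * (T * a) = d * a * T := by ring
      _ ≤ 2 * min 1 T * T := by gcongr
      _ = 2 * (min 1 T * T) := mul_assoc _ _ _
      _ ≤ 2 * ((√d * ε) ^ 2 / 8) := by
        gcongr
        exact min_one_mul_self_le (by positivity) (by rw [hT, hsq])
      _ = d * (ε / 2) ^ 2 := by rw [hsq]; ring
  exact ⟨le_of_mul_le_mul_left hhalf hd₀, le_of_mul_le_mul_left hmul hd₀⟩

lemma exists_stdSimplex_le_chiSqE (hd : 2 ≤ d) {q : Fin d → ℝ} (hq : q ∈ stdSimplex ℝ (Fin d))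
    (z : Fin d) {ε : ℝ} (hε₀ : 0 < ε) (hε₁ : ε ≤ 1) :
    ∃ p ∈ stdSimplex ℝ (Fin d), 1 - ε ≤ p z ∧
      ENNReal.ofReal ((√d * ε + d * ε ^ 2) / 16) ≤ chiSqE p q := by
  have hd₂ : (2 : ℝ) ≤ d := mod_cast hd
  have : Nontrivial (Fin d) := Fin.nontrivial_iff_two_le.2 hd
  obtain ⟨T, hT⟩ : ∃ T, T = (√d * ε + d * ε ^ 2) / 16 := ⟨_, rfl⟩
  rw [← hT]
  rcases le_or_gt T (1 - q z) with hspread | hspread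
  · refine ⟨Pi.single z 1, single_mem_stdSimplex ℝ z, by simp [hε₀.le], ?_⟩
    rw [← hq.2, ← Finset.sum_erase_eq_sub (Finset.mem_univ z)] at hspread
    refine (ENNReal.ofReal_le_ofReal hspread).trans (ofReal_sum_le_chiSqE (fun j _ => hq.1 j) ?_)
    exact fun j hj => Pi.single_eq_of_ne (Finset.ne_of_mem_erase hj) _
  · obtain ⟨j, hjz, hj⟩ := exists_ne_card_sub_one_mul_le hq.2 z
    refine ⟨_, single_add_single_mem_stdSimplex z j hε₀.le hε₁, by simp [hjz.symm], ?_⟩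
    have hqj : d * q j ≤ 2 * min 1 T := by
      have hmin : 1 - q z ≤ min 1 T := le_min (by linarith [hq.1 z]) hspread.le
      rw [Fintype.card_fin] at hj
      nlinarith [hq.1 j]
    obtain ⟨hhalf, hmul⟩ := le_half_and_mul_le_sq (by linarith) hε₀.le hε₁ hT hqj
    refine le_trans ?_ (chiSqTerm_le_chiSqE _ q j)
    simpa [hjz] using ofReal_le_chiSqTerm_of_le_half hε₀ hhalf hmul

lemma exists_one_sub_pow_le_sampleProb (hd : 2 ≤ d) {ε : ℝ} (hε₀ : 0 < ε) (hε₁ : ε ≤ 1)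
    {Φ : (Fin n → Fin d) → Fin d → ℝ} (hΦ : ∀ x, Φ x ∈ stdSimplex ℝ (Fin d)) :
    ∃ p ∈ stdSimplex ℝ (Fin d), (1 - ε) ^ n ≤
      sampleProb p {x | ENNReal.ofReal ((√d * ε + d * ε ^ 2) / 16) ≤ chiSqE p (Φ x)} := by
  obtain ⟨p, hp, hpz, hchi⟩ :=
    exists_stdSimplex_le_chiSqE hd (hΦ (Function.const _ ⟨0, by omega⟩)) ⟨0, by omega⟩ hε₀ hε₁
  exact ⟨p, hp, (pow_le_pow_left₀ (sub_nonneg.2 hε₁) hpz n).trans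
    (pow_le_sampleProb_of_const_mem hp.1 hchi)⟩

end TwoPoint

section Hypercube

variable {n d : ℕ} {ι : Type*}

/-- The neighbour of `σ` in the hypercube in direction `k`. -/
def flipAt [DecidableEq ι] (k : ι) (σ : ι → Bool) : ι → Bool :=
  Function.update σ k (!σ k)

lemma flipAt_involutive [DecidableEq ι] (k : ι) : Function.Involutive (flipAt k) := fun σ => by
  simp [flipAt]

/-- The two light atoms of the `k`-th pair, in an enumeration `e` of the atoms as one heavy atom
`e none` and pairs of light atoms `e (some (k, true))`, `e (some (k, false))`. -/
def pairAtoms (e : Option (ι × Bool) ↪ Fin d) (k : ι) : Finset (Fin d) :=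
  Finset.univ.image fun t => e (some (k, t))

/-- The estimate `q` gets the sign `σ k` of the `k`-th pair wrong, ties counting as wrong: it gives
no more mass to the atom of the pair selected by `σ k` than to the other one. -/
def Misranks (e : Option (ι × Bool) ↪ Fin d) (q : Fin d → ℝ) (σ : ι → Bool) (k : ι) : Prop :=
  q (e (some (k, σ k))) ≤ q (e (some (k, !σ k)))

lemma misranks_or_misranks_flipAt [DecidableEq ι] (e : Option (ι × Bool) ↪ Fin d) (q : Fin d → ℝ)
    (σ : ι → Bool) (k : ι) : Misranks e q σ k ∨ Misranks e q (flipAt k σ) k := by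
  simpa [Misranks, flipAt] using le_total (q (e (some (k, σ k)))) (q (e (some (k, !σ k))))

variable [Fintype ι]

/-- The hypercube family of Assouad's method: the sign `σ k` selects which of the two
light atoms of the `k`-th pair carries the mass `b`, and the heavy atom takes the rest. -/
noncomputable def cubeDist (e : Option (ι × Bool) ↪ Fin d) (b : ℝ) (σ : ι → Bool) : Fin d → ℝ :=
  Pi.single (e none) (1 - Fintype.card ι * b) + ∑ k, Pi.single (e (some (k, σ k))) b

lemma sum_cubeDist (e : Option (ι × Bool) ↪ Fin d) (b : ℝ) (σ : ι → Bool) :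
    ∑ j, cubeDist e b σ j = 1 := by
  simp only [cubeDist, Pi.add_apply, Finset.sum_apply, Finset.sum_add_distrib]
  rw [Finset.sum_comm]
  simp

lemma cubeDist_mem_stdSimplex (e : Option (ι × Bool) ↪ Fin d) {b : ℝ} (hb : 0 ≤ b)
    (hcard : Fintype.card ι * b ≤ 1) (σ : ι → Bool) :
    cubeDist e b σ ∈ stdSimplex ℝ (Fin d) := by
  refine ⟨Pi.le_def.1 ?_, sum_cubeDist e b σ⟩
  exact add_nonneg (Pi.single_nonneg.2 (sub_nonneg.2 hcard))
    (Finset.sum_nonneg fun k _ => Pi.single_nonneg.2 hb)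

lemma cubeDist_apply_some (e : Option (ι × Bool) ↪ Fin d) (b : ℝ) (σ : ι → Bool) (k : ι)
    (t : Bool) : cubeDist e b σ (e (some (k, t))) = if t = σ k then b else 0 := by
  classical
  simp [cubeDist, Finset.sum_apply, Pi.single_apply, ite_and]

lemma sum_cubeDist_compl_pairAtoms (e : Option (ι × Bool) ↪ Fin d) (b : ℝ) (σ : ι → Bool)
    (k : ι) : ∑ j ∈ (pairAtoms e k)ᶜ, cubeDist e b σ j = 1 - b := by
  have htotal := Finset.sum_compl_add_sum (pairAtoms e k) (cubeDist e b σ)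
  have hpair : ∑ j ∈ pairAtoms e k, cubeDist e b σ j = b := by
    have hinj : Function.Injective fun t => e (some (k, t)) := fun s t h => by simpa using h
    rw [pairAtoms, Finset.sum_image hinj.injOn]
    simp [cubeDist_apply_some]
  rw [sum_cubeDist, hpair] at htotal
  linarith

lemma cubeDist_flipAt [DecidableEq ι] (e : Option (ι × Bool) ↪ Fin d) (b : ℝ) (σ : ι → Bool)
    {k : ι} {j : Fin d} (hj : j ∉ pairAtoms e k) :
    cubeDist e b (flipAt k σ) j = cubeDist e b σ j := by
  simp only [cubeDist, Pi.add_apply, Finset.sum_apply]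
  congr 1
  refine Finset.sum_congr rfl fun l _ => ?_
  rcases eq_or_ne l k with rfl | hl
  · have hne (t : Bool) : j ≠ e (some (l, t)) := fun h =>
      hj (Finset.mem_image.2 ⟨t, Finset.mem_univ t, h.symm⟩)
    rw [Pi.single_eq_of_ne (hne _), Pi.single_eq_of_ne (hne _)]
  · rw [flipAt, Function.update_of_ne hl]

lemma one_sub_pow_le_sampleProb_misranks_add [DecidableEq ι] (e : Option (ι × Bool) ↪ Fin d)
    {b : ℝ} (hb : 0 ≤ b) (hcard : Fintype.card ι * b ≤ 1) (Φ : (Fin n → Fin d) → Fin d → ℝ)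
    (σ : ι → Bool) (k : ι) :
    (1 - b) ^ n ≤ sampleProb (cubeDist e b σ) {x | Misranks e (Φ x) σ k} +
      sampleProb (cubeDist e b (flipAt k σ)) {x | Misranks e (Φ x) (flipAt k σ) k} := by
  rw [← sum_cubeDist_compl_pairAtoms e b σ k]
  exact pow_le_sampleProb_add_sampleProb (cubeDist_mem_stdSimplex e hb hcard _).1
    (cubeDist_mem_stdSimplex e hb hcard _).1
    (fun j hj => (cubeDist_flipAt e b σ (Finset.mem_compl.1 hj)).symm)
    (Set.eq_univ_of_forall fun x => misranks_or_misranks_flipAt e (Φ x) σ k)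

lemma exists_card_mul_half_le_sum_of_flipAt [DecidableEq ι] {f : (ι → Bool) → ι → ℝ} {c : ℝ}
    (h : ∀ σ k, c ≤ f σ k + f (flipAt k σ) k) :
    ∃ σ, Fintype.card ι * (c / 2) ≤ ∑ k, f σ k := by
  have havg (k : ι) : ∑ _σ : ι → Bool, c / 2 ≤ ∑ σ, f σ k := by
    have hflip : ∑ σ, f (flipAt k σ) k = ∑ σ, f σ k :=
      Equiv.sum_comp (flipAt_involutive k).toPerm fun σ => f σ k
    have hsum : ∑ _σ : ι → Bool, c ≤ ∑ σ, f σ k + ∑ σ, f (flipAt k σ) k := by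
      rw [← Finset.sum_add_distrib]
      exact Finset.sum_le_sum fun σ _ => h σ k
    rw [← Finset.sum_div]
    linarith
  have htotal : ∑ _σ : ι → Bool, ∑ _k : ι, c / 2 ≤ ∑ σ, ∑ k, f σ k := by
    rw [Finset.sum_comm, Finset.sum_comm (f := f)]
    exact Finset.sum_le_sum fun k _ => havg k
  obtain ⟨σ, -, hσ⟩ := Finset.exists_le_of_sum_le Finset.univ_nonempty htotal
  exact ⟨σ, by simpa using hσ⟩

open Classical in
lemma ofReal_card_misranks_mul_le_chiSqE (e : Option (ι × Bool) ↪ Fin d) {b : ℝ} (hb : 0 < b)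
    (q : Fin d → ℝ) (σ : ι → Bool) :
    ENNReal.ofReal (#{k | Misranks e q σ k} * (b / 2)) ≤ chiSqE (cubeDist e b σ) q := by
  set g : ι → Bool → ℝ≥0∞ := fun k t =>
    chiSqTerm (cubeDist e b σ (e (some (k, t)))) (q (e (some (k, t))))
  have hpair (k : ι) (hk : Misranks e q σ k) : ENNReal.ofReal (b / 2) ≤ ∑ t, g k t := by
    have hsum : ∑ t, g k t = g k (σ k) + g k (!σ k) := by
      cases σ k <;> simp [add_comm]
    rw [hsum]
    simpa [g, cubeDist_apply_some] using ofReal_half_le_chiSqTerm_add hb hk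
  calc ENNReal.ofReal (#{k | Misranks e q σ k} * (b / 2))
      = ∑ k with Misranks e q σ k, ENNReal.ofReal (b / 2) := by
        rw [ENNReal.ofReal_mul (Nat.cast_nonneg _), ENNReal.ofReal_natCast, Finset.sum_const,
          nsmul_eq_mul]
    _ ≤ ∑ k with Misranks e q σ k, ∑ t, g k t :=
      Finset.sum_le_sum fun k hk => hpair k (Finset.mem_filter.1 hk).2
    _ ≤ ∑ k, ∑ t, g k t := Finset.sum_le_sum_of_subset (Finset.filter_subset _ _)
    _ = ∑ a : ι × Bool, g a.1 a.2 := (Fintype.sum_prod_type' g).symm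
    _ ≤ chiSqE (cubeDist e b σ) q :=
      sum_chiSqTerm_comp_le_chiSqE (e.injective.comp (Option.some_injective _)) _ _

lemma exists_half_one_sub_pow_sub_le_sampleProb [Nonempty ι] (e : Option (ι × Bool) ↪ Fin d)
    {b θ : ℝ} (hb : 0 < b) (hcard : Fintype.card ι * b ≤ 1) (hθ : 0 ≤ θ)
    (Φ : (Fin n → Fin d) → Fin d → ℝ) :
    ∃ p ∈ stdSimplex ℝ (Fin d), (1 - b) ^ n / 2 - θ ≤
      sampleProb p {x | ENNReal.ofReal (θ * Fintype.card ι * (b / 2)) ≤ chiSqE p (Φ x)} := by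
  classical
  obtain ⟨σ, hσ⟩ := exists_card_mul_half_le_sum_of_flipAt
    (one_sub_pow_le_sampleProb_misranks_add e hb.le hcard Φ)
  have hp := cubeDist_mem_stdSimplex e hb.le hcard σ
  refine ⟨_, hp, ?_⟩
  have hmarkov := le_of_mul_le_mul_left
    (hσ.trans (sum_sampleProb_le_card_mul hp (fun k => {x | Misranks e (Φ x) σ k}) hθ))
    (Nat.cast_pos.2 Fintype.card_pos)
  refine (sub_le_iff_le_add.2 hmarkov).trans (sampleProb_mono hp.1 fun x hx => ?_)
  refine (ENNReal.ofReal_le_ofReal ?_).trans (ofReal_card_misranks_mul_le_chiSqE e hb (Φ x) σ)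
  exact mul_le_mul_of_nonneg_right hx (half_pos hb).le

lemma exists_exp_neg_one_le_sampleProb (hd : 3 ≤ d) (hdn : d ≤ n)
    (Φ : (Fin n → Fin d) → Fin d → ℝ) :
    ∃ p ∈ stdSimplex ℝ (Fin d), Real.exp (-1) ≤
      sampleProb p {x | ENNReal.ofReal (d / (1000 * n)) ≤ chiSqE p (Φ x)} := by
  obtain ⟨K, hK₀, hKd, hdK⟩ : ∃ K : ℕ, 0 < K ∧ 2 * K + 1 ≤ d ∧ d ≤ 4 * K :=
    ⟨(d - 1) / 2, by omega, by omega, by omega⟩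
  have : NeZero K := ⟨hK₀.ne'⟩
  have hn : (0 : ℝ) < n := by exact_mod_cast (by omega : 0 < n)
  obtain ⟨e⟩ : Nonempty (Option (Fin K × Bool) ↪ Fin d) :=
    Function.Embedding.nonempty_of_card_le (by simp; omega)
  have hcard : Fintype.card (Fin K) * (1 / (10 * n) : ℝ) ≤ 1 := by
    have hKn : (K : ℝ) ≤ n := by exact_mod_cast (by omega : K ≤ n)
    rw [Fintype.card_fin, mul_one_div, div_le_one (by positivity)]
    linarith
  -- `b` and `θ` are chosen so that `(9 / 10) / 2 - θ = 37 / 100` just exceeds `exp (-1)`.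
  obtain ⟨p, hp, h⟩ := exists_half_one_sub_pow_sub_le_sampleProb e (b := 1 / (10 * n)) (θ := 2 / 25)
    (by positivity) hcard (by norm_num) Φ
  have hbernoulli : 9 / 10 ≤ (1 - 1 / (10 * n) : ℝ) ^ n := by
    have hle : 1 / (10 * n : ℝ) ≤ 1 := by
      have : (1 : ℝ) ≤ n := by exact_mod_cast (by omega : 1 ≤ n)
      rw [div_le_one (by positivity)]
      linarith
    calc (9 / 10 : ℝ) = 1 + n * -(1 / (10 * n)) := by field_simp; norm_num
      _ ≤ (1 + -(1 / (10 * n))) ^ n := one_add_mul_le_pow (by linarith) n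
      _ = (1 - 1 / (10 * n)) ^ n := by rw [sub_eq_add_neg]
  have hthreshold : d / (1000 * n) ≤ 2 / 25 * Fintype.card (Fin K) * (1 / (10 * n) / 2 : ℝ) := by
    have hdK' : (d : ℝ) ≤ 4 * K := by exact_mod_cast hdK
    rw [Fintype.card_fin, div_le_iff₀ (by positivity)]
    field_simp
    linarith
  refine ⟨p, hp, le_trans (by linarith [Real.exp_neg_one_lt_d9]) (h.trans ?_)⟩
  exact sampleProb_mono hp.1 fun x hx => (ENNReal.ofReal_le_ofReal hthreshold).trans hx

end Hypercube

section Rate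

variable {n d : ℕ} {L : ℝ}

/-- The minimax rate of estimation in χ²-divergence over `d` atoms from `n` samples, at confidence
level `1 - exp (-L)`. -/
noncomputable def chiSqRate (n d : ℕ) (L : ℝ) : ℝ :=
  (d + √d * L) / n + d * L ^ 2 / n ^ 2

lemma chiSqRate_le_of_sqrt_le (hL : √d ≤ 2 * L) :
    chiSqRate n d L ≤ 6 * (√d * (L / (2 * n)) + d * (L / (2 * n)) ^ 2) := by
  have hd : (d : ℝ) ≤ √d * (2 * L) := by
    calc (d : ℝ) = √d * √d := (Real.mul_self_sqrt d.cast_nonneg).symm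
      _ ≤ √d * (2 * L) := by gcongr
  have hsq : 0 ≤ (d : ℝ) * (L / n) ^ 2 := by positivity
  calc chiSqRate n d L ≤ (√d * (2 * L) + √d * L) / n + d * L ^ 2 / n ^ 2 := by
        rw [chiSqRate]; gcongr
    _ = 3 * (√d * (L / n)) + d * (L / n) ^ 2 := by ring
    _ ≤ 3 * (√d * (L / n)) + 3 / 2 * (d * (L / n) ^ 2) := by linarith
    _ = 6 * (√d * (L / (2 * n)) + d * (L / (2 * n)) ^ 2) := by ring

lemma chiSqRate_le_of_le_sqrt (hdn : d ≤ n) (hL₀ : 0 ≤ L) (hL : 2 * L ≤ √d) :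
    chiSqRate n d L ≤ 2 * (d / n) := by
  have hsq : √d * √d = d := Real.mul_self_sqrt d.cast_nonneg
  have hlinear : √d * L ≤ d / 2 := by nlinarith [Real.sqrt_nonneg (d : ℝ)]
  have hquadratic : L ^ 2 ≤ n / 4 := by
    have hdn' : (d : ℝ) ≤ n := by exact_mod_cast hdn
    nlinarith
  calc chiSqRate n d L ≤ (d + d / 2) / n + d * (n / 4) / n ^ 2 := by
        rw [chiSqRate]; gcongr
    _ = 7 / 4 * (d / n) := by
      rcases eq_or_ne (n : ℝ) 0 with hn | hn
      · simp [hn]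
      · field_simp; ring
    _ ≤ 2 * (d / n) := by gcongr; norm_num

lemma exp_neg_le_one_sub_half_div_pow (hL₀ : 0 ≤ L) (hLn : L ≤ n) :
    Real.exp (-L) ≤ (1 - L / (2 * n)) ^ n := by
  rcases Nat.eq_zero_or_pos n with rfl | hn
  · simpa using hL₀
  have hn' : (0 : ℝ) < n := Nat.cast_pos.2 hn
  obtain ⟨y, rfl⟩ : ∃ y, L = n * y := ⟨L / n, by field_simp⟩
  have hy₀ : 0 ≤ y := nonneg_of_mul_nonneg_right hL₀ hn'
  have hy₁ : y ≤ 1 := by nlinarith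
  have hexp : Real.exp (-y) ≤ 1 - y / 2 := by
    rw [Real.exp_neg, inv_le_iff_one_le_mul₀ (Real.exp_pos y)]
    nlinarith [Real.add_one_le_exp y, mul_nonneg hy₀ (sub_nonneg.2 hy₁)]
  calc Real.exp (-(n * y)) = Real.exp (-y) ^ n := by rw [← Real.exp_nat_mul, mul_neg]
    _ ≤ (1 - y / 2) ^ n := by gcongr
    _ = (1 - n * y / (2 * n)) ^ n := by congr 2; field_simp

lemma exists_exp_neg_le_sampleProb_of_sqrt_le (hd : 2 ≤ d) (hL₀ : 0 < L) (hLn : L ≤ n)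
    (hdL : √d ≤ 2 * L) {Φ : (Fin n → Fin d) → Fin d → ℝ} (hΦ : ∀ x, Φ x ∈ stdSimplex ℝ (Fin d)) :
    ∃ p ∈ stdSimplex ℝ (Fin d), Real.exp (-L) ≤
      sampleProb p {x | ENNReal.ofReal (1 / 5000 * chiSqRate n d L) ≤ chiSqE p (Φ x)} := by
  have hn : (0 : ℝ) < n := hL₀.trans_le hLn
  have hε : L / (2 * n) ≤ 1 := (div_le_one (by positivity)).2 (by linarith)
  obtain ⟨p, hp, h⟩ := exists_one_sub_pow_le_sampleProb hd (by positivity) hε hΦ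
  refine ⟨p, hp, (exp_neg_le_one_sub_half_div_pow hL₀.le hLn).trans (h.trans ?_)⟩
  refine sampleProb_mono hp.1 fun x hx => (ENNReal.ofReal_le_ofReal ?_).trans hx
  have hnonneg : 0 ≤ √d * (L / (2 * n)) + d * (L / (2 * n)) ^ 2 := by positivity
  linarith [chiSqRate_le_of_sqrt_le (n := n) hdL]

lemma exists_exp_neg_one_le_sampleProb_of_le_sqrt (hd : 3 ≤ d) (hdn : d ≤ n) (hL₀ : 0 ≤ L)
    (hdL : 2 * L ≤ √d) (Φ : (Fin n → Fin d) → Fin d → ℝ) :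
    ∃ p ∈ stdSimplex ℝ (Fin d), Real.exp (-1) ≤
      sampleProb p {x | ENNReal.ofReal (1 / 5000 * chiSqRate n d L) ≤ chiSqE p (Φ x)} := by
  obtain ⟨p, hp, h⟩ := exists_exp_neg_one_le_sampleProb hd hdn Φ
  refine ⟨p, hp, h.trans ?_⟩
  refine sampleProb_mono hp.1 fun x hx => (ENNReal.ofReal_le_ofReal ?_).trans hx
  have hnonneg : 0 ≤ (d : ℝ) / n := by positivity
  calc 1 / 5000 * chiSqRate n d L ≤ 1 / 5000 * (2 * (d / n)) := by
        gcongr; exact chiSqRate_le_of_le_sqrt hdn hL₀ hdL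
    _ ≤ 1 / 1000 * (d / n) := by linarith
    _ = d / (1000 * n) := by rw [div_mul_div_comm, one_mul]

end Rate

theorem minimax_lower_bound_general {n d : ℕ} (hdn : d ≤ n) (hd : 2 ≤ d) {δ : ℝ}
    (hδl : Real.exp (-(n : ℝ)) < δ) (hδu : δ < Real.exp (-1))
    {Φ : (Fin n → Fin d) → Fin d → ℝ} (hΦ : ∀ x, Φ x ∈ stdSimplex ℝ (Fin d)) :
    ∃ p ∈ stdSimplex ℝ (Fin d), δ ≤ sampleProb p {x |
      ENNReal.ofReal (1 / 5000 * chiSqRate n d (Real.log (1 / δ))) ≤ chiSqE p (Φ x)} := by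
  have hδ : 0 < δ := (Real.exp_pos _).trans hδl
  obtain ⟨L, rfl⟩ : ∃ L, δ = Real.exp (-L) := ⟨-Real.log δ, by rw [neg_neg, Real.exp_log hδ]⟩
  have hLn : L < n := neg_lt_neg_iff.1 (Real.exp_lt_exp.1 hδl)
  have hL : 1 < L := neg_lt_neg_iff.1 (Real.exp_lt_exp.1 hδu)
  rw [one_div (Real.exp _), ← Real.exp_neg, neg_neg, Real.log_exp]
  rcases le_total √d (2 * L) with hdL | hdL
  · exact exists_exp_neg_le_sampleProb_of_sqrt_le hd (by linarith) hLn.le hdL hΦ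
  · have hd₃ : 3 ≤ d := by
      have hfour : (2 : ℝ) ^ 2 < d := (Real.lt_sqrt zero_le_two).1 (by linarith)
      have hfour' : 2 ^ 2 < d := by exact_mod_cast hfour
      omega
    obtain ⟨p, hp, h⟩ :=
      exists_exp_neg_one_le_sampleProb_of_le_sqrt hd₃ hdn (by linarith) hdL Φ
    exact ⟨p, hp, hδu.le.trans h⟩

theorem minimax_lower_bound (n d : ℕ) (hdn : d ≤ n) (hd : 5000 ≤ d)
    (δ : ℝ) (hδl : Real.exp (-(n : ℝ)) < δ) (hδu : δ < Real.exp (-1))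
    (Φ : (Fin n → Fin d) → (Fin d → ℝ))
    (hΦ : ∀ x, (∀ j, 0 ≤ Φ x j) ∧ ∑ j, Φ x j = 1) :
    ∃ p : Fin d → ℝ, (∀ j, 0 ≤ p j) ∧ (∑ j, p j = 1) ∧
      δ ≤ sampleProb p {x |
        ENNReal.ofReal ((1 / 5000) *
          ((((d : ℝ) + Real.sqrt d * Real.log (1 / δ)) / n)
            + (d : ℝ) * Real.log (1 / δ) ^ 2 / n ^ 2)) ≤ chiSqE p (Φ x)} := by
  obtain ⟨p, hp, h⟩ := minimax_lower_bound_general hdn (by omega) hδl hδu hΦ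
  exact ⟨p, hp.1, hp.2, h⟩
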